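/- arXiv:2009.09252 — 2 statements merged into one kernel-verified Lean document; each statement's English description precedes it below -/
import Mathlib

section
/- Fix a positive integer k and let ℍ_k = {(z₁,z₂) ∈ ℂ² : |z₁|^k < |z₂| < 1}, with 𝒫(z,w) = z₂·conj(w₂)/((1 - z₂·conj(w₂))²(z₂·conj(w₂) - (z₁conj(w₁))^k)²). For every ε > 0 there exists δ > 0 (depending only on ε and k) such that for all w ∈ ℍ_k, ∫_{{z ∈ ℍ_k : |z₂| < δ}} |𝒫(z,w)|² dV(z) ≤ ε · |w₂|^{-2}(1 - |w₂|²)^{-2}(1 - |w₁|^{2k}/|w₂|²)^{-2}. -/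
open Complex ComplexConjugate MeasureTheory

/-- The fat Hartogs triangle `ℍ_k = {(z₁,z₂) : |z₁|^k < |z₂| < 1}`. -/
def hartogsTriangle (k : ℕ) : Set (ℂ × ℂ) :=
  {z | ‖z.1‖ ^ k < ‖z.2‖ ∧ ‖z.2‖ < 1}

/-- The kernel `𝒫(z,w) = t / ((1-t)² (t - s^k)²)`, `s = z₁·conj w₁`, `t = z₂·conj w₂`. -/
noncomputable def Pker (k : ℕ) (z w : ℂ × ℂ) : ℂ :=
  z.2 * conj w.2 /
    ((1 - z.2 * conj w.2) ^ 2 * (z.2 * conj w.2 - (z.1 * conj w.1) ^ k) ^ 2)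

/-!
With `s = z₁ conj w₁` and `t = z₂ conj w₂`, factoring `t` out of the kernel gives
`|𝒫(z, w)|² = |1 - t|⁻⁴ |t|⁻² |1 - s ^ k / t|⁻⁴`. If `|z₂| < δ` the first factor is at most
`(1 - δ)⁻⁴`, so everything hinges on the last one. For fixed `z₂`, the function `g = s ^ k / t` of
`z₁` is holomorphic on the fibre, the disc of radius `R = |z₂| ^ (1 / k)`; it vanishes at the
centre and is bounded by `a = |w₁| ^ k / |w₂| < 1`. Up to a power of `1 - |g|²`, `|1 - g|⁻⁴` is
dominated by the Poisson kernel `P(g, 1)`, the real part of the holomorphic function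
`(1 + g) / (1 - g)`, whose circle averages are `P(0, 1) = 1`. The Schwarz lemma controls `|g|` on
each circle, and integrating over the radius bounds the fibre integral of `|1 - g|⁻⁴` by
`4 π R² (1 - a²)⁻²`. What remains is the integral of `|z₂| ^ (2 / k - 2)` over the disc
`|z₂| < δ`, a constant multiple of `δ ^ (2 / k)`, which tends to `0` with `δ`.
-/

open Metric Real Set

theorem lintegral_eq_lintegral_circleMap {f : ℂ → ENNReal} (hf : Measurable f) (c : ℂ) :
    ∫⁻ z, f z =
      ∫⁻ r in Ioi (0 : ℝ), ENNReal.ofReal r * ∫⁻ θ in Ioo (-π) π, f (circleMap c r θ) := by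
  have hpolar (p : ℝ × ℝ) : c + Complex.polarCoord.symm p = circleMap c p.1 p.2 := by
    simp [circleMap, Complex.exp_mul_I]
  have hmeas : Measurable fun p : ℝ × ℝ ↦ f (circleMap c p.1 p.2) := by
    refine hf.comp ?_
    unfold circleMap
    fun_prop
  calc ∫⁻ z, f z
      = ∫⁻ z, f (c + z) := (lintegral_add_left_eq_self f c).symm
    _ = ∫⁻ p in Ioi (0 : ℝ) ×ˢ Ioo (-π) π, ENNReal.ofReal p.1 * f (circleMap c p.1 p.2) := by
      simp_rw [← Complex.lintegral_comp_polarCoord_symm, hpolar, smul_eq_mul, polarCoord_target]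
    _ = ∫⁻ r in Ioi (0 : ℝ), ∫⁻ θ in Ioo (-π) π, ENNReal.ofReal r * f (circleMap c r θ) := by
      rw [Measure.volume_eq_prod]
      exact setLIntegral_prod _
        ((ENNReal.measurable_ofReal.comp measurable_fst).mul hmeas).aemeasurable
    _ = _ := by simp_rw [lintegral_const_mul' _ _ ENNReal.ofReal_ne_top]

theorem lintegral_ofReal_circleMap {f : ℂ → ℝ} {c : ℂ} {r : ℝ}
    (hf : ContinuousOn f (sphere c |r|)) (hf₀ : ∀ z ∈ sphere c |r|, 0 ≤ f z) :
    ∫⁻ θ in Ioo (-π) π, ENNReal.ofReal (f (circleMap c r θ)) =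
      ENNReal.ofReal (2 * π * circleAverage f c r) := by
  have hper : (fun θ ↦ f (circleMap c r θ)).Periodic (2 * π) := (periodic_circleMap c r).comp f
  have hcont : Continuous fun θ ↦ f (circleMap c r θ) :=
    hf.comp_continuous (continuous_circleMap c r) (circleMap_mem_sphere' c r)
  have hint : 2 * π * circleAverage f c r = ∫ θ in -π..π, f (circleMap c r θ) := by
    have hshift := hper.intervalIntegral_add_eq (-π) 0
    rw [show -π + 2 * π = π by ring, zero_add] at hshift
    rw [hshift, circleAverage_def, smul_eq_mul, mul_inv_cancel_left₀ two_pi_pos.ne']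
  rw [hint, intervalIntegral.integral_of_le (by linarith [pi_pos]), integral_Ioc_eq_integral_Ioo]
  exact (ofReal_integral_eq_lintegral_ofReal
    (hcont.integrableOn_Icc.mono_set Ioo_subset_Icc_self)
    (.of_forall fun θ ↦ hf₀ _ (circleMap_mem_sphere' c r θ))).symm

theorem lintegral_ball_ofReal_eq_lintegral_circleAverage {f : ℂ → ℝ} {c : ℂ} {R : ℝ}
    (hf : ContinuousOn f (ball c R \ {c})) (hf₀ : ∀ z ∈ ball c R \ {c}, 0 ≤ f z) :
    ∫⁻ z in ball c R, ENNReal.ofReal (f z) =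
      ∫⁻ r in Ioo 0 R, ENNReal.ofReal (2 * π * r * circleAverage f c r) := by
  classical
  set U := ball c R \ {c} with hU
  have hU_meas : MeasurableSet U := measurableSet_ball.diff (measurableSet_singleton c)
  have hf_meas : Measurable (U.indicator fun z ↦ ENNReal.ofReal (f z)) := by
    rw [← piecewise_eq_indicator]
    exact (ENNReal.continuous_ofReal.comp_continuousOn hf).measurable_piecewise
      continuousOn_const hU_meas
  have hmem {r : ℝ} (hr : 0 < r) (θ : ℝ) : circleMap c r θ ∈ U ↔ r < R := by
    simp [hU, hr.ne', abs_of_pos hr, dist_eq_norm, circleMap_sub_center]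
  have hfiber {r : ℝ} (hr : r ∈ Ioi 0) :
      ENNReal.ofReal r * ∫⁻ θ in Ioo (-π) π,
          U.indicator (fun z ↦ ENNReal.ofReal (f z)) (circleMap c r θ) =
        (Ioo 0 R).indicator (fun r ↦ ENNReal.ofReal (2 * π * r * circleAverage f c r)) r := by
    have hr : 0 < r := hr
    by_cases hrR : r < R
    · have hsphere : sphere c |r| ⊆ U := fun z hz ↦ by
        rw [abs_of_pos hr] at hz
        exact ⟨sphere_subset_ball hrR hz, ne_of_mem_sphere hz hr.ne'⟩
      simp_rw [indicator_of_mem ((hmem hr _).2 hrR),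
        indicator_of_mem (show r ∈ Ioo 0 R from ⟨hr, hrR⟩)]
      rw [lintegral_ofReal_circleMap (hf.mono hsphere) fun z hz ↦ hf₀ z (hsphere hz),
        ← ENNReal.ofReal_mul hr.le]
      ring_nf
    · simp [hmem hr, hrR]
  calc ∫⁻ z in ball c R, ENNReal.ofReal (f z)
      = ∫⁻ z in U, ENNReal.ofReal (f z) :=
        (setLIntegral_congr (sdiff_null_ae_eq_self (measure_singleton c))).symm
    _ = ∫⁻ z, U.indicator (fun z ↦ ENNReal.ofReal (f z)) z := (lintegral_indicator hU_meas _).symm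
    _ = ∫⁻ r in Ioi (0 : ℝ),
        (Ioo 0 R).indicator (fun r ↦ ENNReal.ofReal (2 * π * r * circleAverage f c r)) r := by
      rw [lintegral_eq_lintegral_circleMap hf_meas c]
      exact setLIntegral_congr_fun measurableSet_Ioi fun r hr ↦ hfiber hr
    _ = _ := by
      rw [setLIntegral_indicator measurableSet_Ioo, inter_eq_left.2 Ioo_subset_Ioi_self]

theorem lintegral_Ioo_ofReal_eq_sub_of_hasDerivAt {F F' : ℝ → ℝ} {a b : ℝ} (hab : a ≤ b)
    (hF : ContinuousOn F (Icc a b)) (hF' : ∀ x ∈ Ioo a b, HasDerivAt F (F' x) x)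
    (hF'₀ : ∀ x ∈ Ioo a b, 0 ≤ F' x) :
    ∫⁻ x in Ioo a b, ENNReal.ofReal (F' x) = ENNReal.ofReal (F b - F a) := by
  have hint : IntegrableOn F' (Ioc a b) := intervalIntegral.integrableOn_deriv_of_nonneg hF hF' hF'₀
  rw [← intervalIntegral.integral_eq_sub_of_hasDerivAt_of_le hab hF hF'
      ((intervalIntegrable_iff_integrableOn_Ioc_of_le hab).2 hint),
    intervalIntegral.integral_of_le hab, integral_Ioc_eq_integral_Ioo]
  exact (ofReal_integral_eq_lintegral_ofReal (hint.mono_set Ioo_subset_Ioc_self)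
    (ae_restrict_of_forall_mem measurableSet_Ioo hF'₀)).symm

theorem lintegral_ball_norm_sub_rpow {p : ℝ} (hp : -2 < p) (c : ℂ) {R : ℝ} (hR : 0 ≤ R) :
    ∫⁻ z in ball c R, ENNReal.ofReal (‖z - c‖ ^ p) =
      ENNReal.ofReal (2 * π / (p + 2) * R ^ (p + 2)) := by
  have hp₂ : 0 < p + 2 := by linarith
  have hf : ContinuousOn (fun z ↦ ‖z - c‖ ^ p) (ball c R \ {c}) :=
    (continuous_id.sub continuous_const).norm.continuousOn.rpow_const fun z hz ↦
      .inl (norm_ne_zero_iff.2 (sub_ne_zero.2 hz.2))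
  have hF (r : ℝ) (hr : r ∈ Ioo 0 R) :
      HasDerivAt (fun r ↦ 2 * π / (p + 2) * r ^ (p + 2))
        (2 * π * r * circleAverage (fun z ↦ ‖z - c‖ ^ p) c r) r := by
    have havg : circleAverage (fun z ↦ ‖z - c‖ ^ p) c r = r ^ p :=
      circleAverage_const_on_circle fun z hz ↦ by
        rw [mem_sphere_iff_norm.1 hz, abs_of_pos hr.1]
    have hpow := (hasDerivAt_rpow_const (p := p + 2) (.inl hr.1.ne')).const_mul (2 * π / (p + 2))
    refine hpow.congr_deriv ?_
    rw [havg, show p + 2 - 1 = p + 1 by ring, rpow_add_one hr.1.ne']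
    field_simp
  rw [lintegral_ball_ofReal_eq_lintegral_circleAverage hf fun z _ ↦ by positivity,
    lintegral_Ioo_ofReal_eq_sub_of_hasDerivAt hR _ hF]
  · simp [zero_rpow hp₂.ne']
  · intro r hr
    have := circleAverage_nonneg_of_nonneg (f := fun z ↦ ‖z - c‖ ^ p) (c := c) (R := r)
      fun z _ ↦ by positivity
    have := hr.1
    positivity
  · exact (continuous_const.mul (continuous_id.rpow_const fun _ ↦ .inr hp₂.le)).continuousOn

theorem poissonKernel_zero_one (x : ℂ) :
    poissonKernel 0 x 1 = (1 - ‖x‖ ^ 2) / ‖1 - x‖ ^ 2 := by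
  simp [poissonKernel_def]

theorem circleAverage_poissonKernel_comp {g : ℂ → ℂ} {c : ℂ} {r : ℝ}
    (hg : DiffContOnCl ℂ g (ball c |r|)) (hg₁ : ∀ z ∈ closedBall c |r|, ‖g z‖ < 1) :
    circleAverage (fun z ↦ poissonKernel 0 (g z) 1) c r = poissonKernel 0 (g c) 1 := by
  have hne (z : ℂ) (hz : z ∈ closure (ball c |r|)) : 1 - g z ≠ 0 := fun h ↦ by
    have := hg₁ z (closure_ball_subset_closedBall hz)
    simp [← sub_eq_zero.1 h] at this
  have hF : DiffContOnCl ℂ (fun z ↦ (1 + g z) • (1 - g z)⁻¹) (ball c |r|) :=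
    (diffContOnCl_const.add hg).smul ((diffContOnCl_const.sub hg).inv hne)
  have hF_int : CircleIntegrable (fun z ↦ (1 + g z) • (1 - g z)⁻¹) c r :=
    (hF.continuousOn_ball.mono sphere_subset_closedBall).circleIntegrable'
  have hre (x : ℂ) : poissonKernel 0 x 1 = reCLM ((1 + x) • (1 - x)⁻¹) := by
    simp [poissonKernel_eq_re_herglotzRieszKernel, herglotzRieszKernel, div_eq_mul_inv]
  simp_rw [hre]
  rw [← hF.circleAverage]
  exact reCLM.circleAverage_comp_comm hF_int

theorem one_sub_le_norm_one_sub {E : Type*} [SeminormedRing E] [NormOneClass E] {x : E} {ρ : ℝ}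
    (hx : ‖x‖ ≤ ρ) : 1 - ρ ≤ ‖1 - x‖ := by
  calc 1 - ρ ≤ ‖(1 : E)‖ - ‖x‖ := by rw [norm_one]; gcongr
    _ ≤ ‖1 - x‖ := norm_sub_norm_le 1 x

theorem inv_norm_one_sub_pow_four_le {x : ℂ} {ρ : ℝ} (hx : ‖x‖ ≤ ρ) (hρ : ρ < 1) :
    (‖1 - x‖ ^ 4)⁻¹ ≤ 4 / (1 - ρ ^ 2) ^ 3 * poissonKernel 0 x 1 := by
  have hx₀ : 0 ≤ ‖x‖ := norm_nonneg x
  have hsub : 1 - ‖x‖ ≤ ‖1 - x‖ := one_sub_le_norm_one_sub le_rfl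
  have hpos : 0 < ‖1 - x‖ := by linarith
  have hρ_pos : 0 < 1 - ρ ^ 2 := by nlinarith
  have hle : 1 - ρ ^ 2 ≤ 1 - ‖x‖ ^ 2 := by gcongr
  have htwo : 1 - ‖x‖ ^ 2 ≤ 2 * ‖1 - x‖ := by nlinarith
  have hx_pos : 0 < 1 - ‖x‖ ^ 2 := hρ_pos.trans_le hle
  calc (‖1 - x‖ ^ 4)⁻¹
      = 4 / (2 * ‖1 - x‖) ^ 2 / ‖1 - x‖ ^ 2 := by field_simp; norm_num
    _ ≤ 4 / (1 - ‖x‖ ^ 2) ^ 2 / ‖1 - x‖ ^ 2 := by gcongr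
    _ = 4 / (1 - ‖x‖ ^ 2) ^ 3 * poissonKernel 0 x 1 := by
      rw [poissonKernel_zero_one]
      field_simp
    _ ≤ 4 / (1 - ρ ^ 2) ^ 3 * poissonKernel 0 x 1 := by
      gcongr
      rw [poissonKernel_zero_one]
      positivity

theorem circleAverage_inv_norm_one_sub_pow_four_le {g : ℂ → ℂ} {c : ℂ} {r ρ : ℝ} (hρ : ρ < 1)
    (hg : DiffContOnCl ℂ g (ball c |r|)) (hgc : g c = 0)
    (hgρ : ∀ z ∈ closedBall c |r|, ‖g z‖ ≤ ρ) :
    circleAverage (fun z ↦ (‖1 - g z‖ ^ 4)⁻¹) c r ≤ 4 / (1 - ρ ^ 2) ^ 3 := by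
  have hne (z : ℂ) (hz : z ∈ closedBall c |r|) : ‖1 - g z‖ ≠ 0 :=
    ((sub_pos.2 hρ).trans_le (one_sub_le_norm_one_sub (hgρ z hz))).ne'
  have hg_cont : ContinuousOn g (sphere c |r|) :=
    hg.continuousOn_ball.mono sphere_subset_closedBall
  have hdist : ContinuousOn (fun z ↦ ‖1 - g z‖) (sphere c |r|) := by fun_prop
  have hleft : CircleIntegrable (fun z ↦ (‖1 - g z‖ ^ 4)⁻¹) c r :=
    ((hdist.pow 4).inv₀ fun z hz ↦
      pow_ne_zero 4 (hne z (sphere_subset_closedBall hz))).circleIntegrable'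
  have hright : CircleIntegrable
      (fun z ↦ 4 / (1 - ρ ^ 2) ^ 3 * poissonKernel 0 (g z) 1) c r := by
    simp_rw [poissonKernel_zero_one]
    refine (continuousOn_const.mul (ContinuousOn.div (by fun_prop) (hdist.pow 2)
      fun z hz ↦ ?_)).circleIntegrable'
    exact pow_ne_zero 2 (hne z (sphere_subset_closedBall hz))
  calc circleAverage (fun z ↦ (‖1 - g z‖ ^ 4)⁻¹) c r
      ≤ circleAverage (fun z ↦ 4 / (1 - ρ ^ 2) ^ 3 * poissonKernel 0 (g z) 1) c r :=
        circleAverage_mono hleft hright fun z hz ↦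
          inv_norm_one_sub_pow_four_le (hgρ z (sphere_subset_closedBall hz)) hρ
    _ = 4 / (1 - ρ ^ 2) ^ 3 * circleAverage (fun z ↦ poissonKernel 0 (g z) 1) c r :=
        circleAverage_fun_smul (a := 4 / (1 - ρ ^ 2) ^ 3) (f := fun z ↦ poissonKernel 0 (g z) 1)
    _ = 4 / (1 - ρ ^ 2) ^ 3 := by
      rw [circleAverage_poissonKernel_comp hg fun z hz ↦ (hgρ z hz).trans_lt hρ, hgc]
      simp [poissonKernel_zero_one]

theorem circleAverage_inv_norm_one_sub_pow_four_le_of_mapsTo {g : ℂ → ℂ} {c : ℂ} {r R a : ℝ}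
    (hr : r ∈ Ioo 0 R) (ha : a < 1) (hg : DifferentiableOn ℂ g (ball c R)) (hgc : g c = 0)
    (hga : MapsTo g (ball c R) (closedBall 0 a)) :
    circleAverage (fun z ↦ (‖1 - g z‖ ^ 4)⁻¹) c r ≤ 4 / (1 - (a / R * r) ^ 2) ^ 3 := by
  obtain ⟨hr₀, hrR⟩ := hr
  have hR : 0 < R := hr₀.trans hrR
  have ha₀ : 0 ≤ a := nonempty_closedBall.1 ⟨_, hga (mem_ball_self hR)⟩
  have hsub : closedBall c |r| ⊆ ball c R := by
    rw [abs_of_pos hr₀]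
    exact closedBall_subset_ball hrR
  have hschwarz (z : ℂ) (hz : z ∈ closedBall c |r|) : ‖g z‖ ≤ a / R * r := by
    have hdist := dist_le_div_mul_dist_of_mapsTo_ball hg (by rwa [hgc]) (hsub hz)
    rw [hgc, dist_zero_right] at hdist
    rw [mem_closedBall, abs_of_pos hr₀] at hz
    exact hdist.trans (by gcongr)
  have hlt : a / R * r < 1 := by
    rw [div_mul_eq_mul_div, div_lt_one hR]
    nlinarith
  exact circleAverage_inv_norm_one_sub_pow_four_le hlt
    (hg.mono (closure_ball_subset_closedBall.trans hsub)).diffContOnCl hgc hschwarz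

theorem hasDerivAt_sq_mul_two_sub_div_one_sub_mul_sq_sq {A r : ℝ} (hr : 1 - A * r ^ 2 ≠ 0) :
    HasDerivAt (fun r ↦ r ^ 2 * (2 - A * r ^ 2) / (1 - A * r ^ 2) ^ 2)
      (4 * r / (1 - A * r ^ 2) ^ 3) r := by
  have hpow : HasDerivAt (fun r ↦ A * r ^ 2) (A * (2 * r)) r := by
    simpa using (hasDerivAt_pow 2 r).const_mul A
  have hnum := (hasDerivAt_pow 2 r).fun_mul (hpow.const_sub 2)
  have hden := (hpow.const_sub 1).fun_pow 2
  refine (hnum.fun_div hden (pow_ne_zero 2 hr)).congr_deriv ?_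
  field_simp
  ring

theorem lintegral_Ioo_ofReal_div_one_sub_mul_sq_pow_three {A R : ℝ} (hA : 0 ≤ A) (hR : 0 ≤ R)
    (hAR : A * R ^ 2 < 1) :
    ∫⁻ r in Ioo 0 R, ENNReal.ofReal (4 * r / (1 - A * r ^ 2) ^ 3) =
      ENNReal.ofReal (R ^ 2 * (2 - A * R ^ 2) / (1 - A * R ^ 2) ^ 2) := by
  have hden {r : ℝ} (hr : r ∈ Icc 0 R) : 0 < 1 - A * r ^ 2 := by
    obtain ⟨hr₀, hrR⟩ := hr
    have : A * r ^ 2 ≤ A * R ^ 2 := by gcongr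
    linarith
  have hderiv {r : ℝ} (hr : r ∈ Icc 0 R) :=
    hasDerivAt_sq_mul_two_sub_div_one_sub_mul_sq_sq (hden hr).ne'
  rw [lintegral_Ioo_ofReal_eq_sub_of_hasDerivAt hR
    (fun r hr ↦ (hderiv hr).continuousAt.continuousWithinAt)
    (fun r hr ↦ hderiv (Ioo_subset_Icc_self hr)) fun r hr ↦ ?_]
  · simp
  · have := hr.1
    have := hden (Ioo_subset_Icc_self hr)
    positivity

theorem lintegral_ball_inv_norm_one_sub_pow_four_le {g : ℂ → ℂ} {c : ℂ} {R a : ℝ} (hR : 0 < R)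
    (ha : a < 1) (hg : DifferentiableOn ℂ g (ball c R)) (hgc : g c = 0)
    (hga : MapsTo g (ball c R) (closedBall 0 a)) :
    ∫⁻ z in ball c R, ENNReal.ofReal ((‖1 - g z‖ ^ 4)⁻¹) ≤
      ENNReal.ofReal (4 * π * R ^ 2 / (1 - a ^ 2) ^ 2) := by
  have ha₀ : 0 ≤ a := nonempty_closedBall.1 ⟨_, hga (mem_ball_self hR)⟩
  have hAR : (a / R) ^ 2 * R ^ 2 = a ^ 2 := by field_simp
  have hAR_lt : (a / R) ^ 2 * R ^ 2 < 1 := hAR ▸ pow_lt_one₀ ha₀ ha two_ne_zero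
  have hcont : ContinuousOn (fun z ↦ (‖1 - g z‖ ^ 4)⁻¹) (ball c R) := by
    refine ((continuousOn_const.sub hg.continuousOn).norm.pow 4).inv₀ fun z hz ↦ pow_ne_zero 4 ?_
    have hga' : ‖g z‖ ≤ a := by simpa using hga hz
    exact ((sub_pos.2 ha).trans_le (one_sub_le_norm_one_sub hga')).ne'
  calc ∫⁻ z in ball c R, ENNReal.ofReal ((‖1 - g z‖ ^ 4)⁻¹)
      = ∫⁻ r in Ioo 0 R, ENNReal.ofReal
          (2 * π * r * circleAverage (fun z ↦ (‖1 - g z‖ ^ 4)⁻¹) c r) :=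
        lintegral_ball_ofReal_eq_lintegral_circleAverage (hcont.mono sdiff_subset)
          fun z _ ↦ by positivity
    _ ≤ ∫⁻ r in Ioo 0 R, ENNReal.ofReal (2 * π * r * (4 / (1 - (a / R * r) ^ 2) ^ 3)) := by
      refine setLIntegral_mono' measurableSet_Ioo fun r hr ↦ ENNReal.ofReal_le_ofReal ?_
      have := hr.1
      gcongr
      exact circleAverage_inv_norm_one_sub_pow_four_le_of_mapsTo hr ha hg hgc hga
    _ = ∫⁻ r in Ioo 0 R, ENNReal.ofReal (2 * π) *
          ENNReal.ofReal (4 * r / (1 - (a / R) ^ 2 * r ^ 2) ^ 3) := by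
      refine lintegral_congr fun r ↦ ?_
      rw [← ENNReal.ofReal_mul two_pi_pos.le]
      ring_nf
    _ = ENNReal.ofReal (2 * π * (R ^ 2 * (2 - a ^ 2) / (1 - a ^ 2) ^ 2)) := by
      rw [lintegral_const_mul' _ _ ENNReal.ofReal_ne_top,
        lintegral_Ioo_ofReal_div_one_sub_mul_sq_pow_three (sq_nonneg _) hR.le hAR_lt, hAR,
        ← ENNReal.ofReal_mul two_pi_pos.le]
    _ ≤ ENNReal.ofReal (2 * π * (R ^ 2 * 2 / (1 - a ^ 2) ^ 2)) := by
      gcongr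
      exact sub_le_self 2 (sq_nonneg a)
    _ = ENNReal.ofReal (4 * π * R ^ 2 / (1 - a ^ 2) ^ 2) := by ring_nf

theorem norm_Pker_sq {k : ℕ} {z w : ℂ × ℂ} (hzw : z.2 * conj w.2 ≠ 0) :
    ‖Pker k z w‖ ^ 2 = (‖1 - z.2 * conj w.2‖ ^ 4)⁻¹ * ((‖z.2‖ * ‖w.2‖) ^ 2)⁻¹ *
      (‖1 - (z.1 * conj w.1) ^ k / (z.2 * conj w.2)‖ ^ 4)⁻¹ := by
  have hfactor : z.2 * conj w.2 - (z.1 * conj w.1) ^ k =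
      z.2 * conj w.2 * (1 - (z.1 * conj w.1) ^ k / (z.2 * conj w.2)) := by
    rw [mul_sub, mul_one, mul_div_cancel₀ _ hzw]
  have hnorm : ‖z.2 * conj w.2‖ = ‖z.2‖ * ‖w.2‖ := by simp
  rw [Pker, hfactor, ← hnorm]
  have ht : ‖z.2 * conj w.2‖ ≠ 0 := norm_ne_zero_iff.2 hzw
  simp only [norm_div, norm_mul (_ ^ 2), norm_pow, norm_mul (z.2 * conj w.2)]
  field_simp

theorem norm_Pker_sq_le {k : ℕ} {z w : ℂ × ℂ} {δ : ℝ} (hz : z.2 ≠ 0) (hzδ : ‖z.2‖ ≤ δ)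
    (hδ : δ < 1) (hw : w.2 ≠ 0) (hw₁ : ‖w.2‖ ≤ 1) :
    ‖Pker k z w‖ ^ 2 ≤ ((1 - δ) ^ 4)⁻¹ * ((‖z.2‖ * ‖w.2‖) ^ 2)⁻¹ *
      (‖1 - (z.1 * conj w.1) ^ k / (z.2 * conj w.2)‖ ^ 4)⁻¹ := by
  have hle : ‖z.2 * conj w.2‖ ≤ δ := by
    rw [norm_mul, RCLike.norm_conj]
    exact (mul_le_of_le_one_right (norm_nonneg _) hw₁).trans hzδ
  have hpow : (‖1 - z.2 * conj w.2‖ ^ 4)⁻¹ ≤ ((1 - δ) ^ 4)⁻¹ :=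
    inv_anti₀ (pow_pos (sub_pos.2 hδ) 4)
      (pow_le_pow_left₀ (sub_pos.2 hδ).le (one_sub_le_norm_one_sub hle) 4)
  rw [norm_Pker_sq (mul_ne_zero hz ((map_ne_zero _).2 hw))]
  gcongr

theorem mapsTo_mul_pow_div_mul {k : ℕ} (hk : k ≠ 0) {a b c : ℂ} (hc : c ≠ 0) :
    MapsTo (fun z ↦ (z * a) ^ k / (c * b)) (ball 0 (‖c‖ ^ (k⁻¹ : ℝ)))
      (closedBall 0 (‖a‖ ^ k / ‖b‖)) := fun z hz ↦ by
  have hc_pos : 0 < ‖c‖ := norm_pos_iff.2 hc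
  have hz_pow : ‖z‖ ^ k ≤ ‖c‖ := by
    rw [← rpow_inv_natCast_pow hc_pos.le hk]
    gcongr
    exact (mem_ball_zero_iff.1 hz).le
  rw [mem_closedBall_zero_iff]
  calc ‖(z * a) ^ k / (c * b)‖ = ‖z‖ ^ k * ‖a‖ ^ k / (‖c‖ * ‖b‖) := by simp [mul_pow]
    _ ≤ ‖c‖ * ‖a‖ ^ k / (‖c‖ * ‖b‖) := by gcongr
    _ = ‖a‖ ^ k / ‖b‖ := mul_div_mul_left _ _ hc_pos.ne'

theorem measurable_Pker (k : ℕ) (w : ℂ × ℂ) : Measurable fun z ↦ Pker k z w := by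
  unfold Pker
  fun_prop

namespace hartogsTriangle

theorem snd_ne_zero {k : ℕ} {z : ℂ × ℂ} (hz : z ∈ hartogsTriangle k) : z.2 ≠ 0 :=
  norm_pos_iff.1 ((pow_nonneg (norm_nonneg z.1) k).trans_lt hz.1)

theorem measurableSet (k : ℕ) : MeasurableSet (hartogsTriangle k) :=
  (measurableSet_lt (measurable_fst.norm.pow_const k) measurable_snd.norm).inter
    (measurableSet_lt measurable_snd.norm measurable_const)

theorem mem_and_norm_snd_lt_iff {k : ℕ} (hk : k ≠ 0) {δ : ℝ} (hδ : δ ≤ 1) {z : ℂ × ℂ} :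
    z ∈ hartogsTriangle k ∧ ‖z.2‖ < δ ↔
      z.2 ∈ ball 0 δ ∧ z.1 ∈ ball 0 (‖z.2‖ ^ (k⁻¹ : ℝ)) := by
  have hk₀ : (0 : ℝ) < k := by positivity
  rw [mem_ball_zero_iff, mem_ball_zero_iff,
    lt_rpow_inv_iff_of_pos (norm_nonneg _) (norm_nonneg _) hk₀, rpow_natCast]
  exact ⟨fun h ↦ ⟨h.2, h.1.1⟩, fun h ↦ ⟨⟨h.2, h.1.trans_le hδ⟩, h.1⟩⟩

theorem setLIntegral_norm_snd_lt {k : ℕ} (hk : k ≠ 0) {δ : ℝ} (hδ : δ ≤ 1) {f : ℂ × ℂ → ENNReal}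
    (hf : Measurable f) :
    ∫⁻ z in {z ∈ hartogsTriangle k | ‖z.2‖ < δ}, f z =
      ∫⁻ z₂ in ball (0 : ℂ) δ, ∫⁻ z₁ in ball (0 : ℂ) (‖z₂‖ ^ (k⁻¹ : ℝ)), f (z₁, z₂) := by
  set S := {z ∈ hartogsTriangle k | ‖z.2‖ < δ}
  have hS_meas : MeasurableSet S :=
    (measurableSet k).inter (measurableSet_lt measurable_snd.norm measurable_const)
  rw [← lintegral_indicator hS_meas, Measure.volume_eq_prod,
    lintegral_prod_symm' _ (hf.indicator hS_meas), ← lintegral_indicator measurableSet_ball]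
  congr with z₂
  have hmem (z₁ : ℂ) := mem_and_norm_snd_lt_iff hk hδ (z := (z₁, z₂))
  by_cases hz₂ : z₂ ∈ ball 0 δ
  · rw [indicator_of_mem hz₂, ← lintegral_indicator measurableSet_ball]
    congr with z₁
    exact indicator_eq_indicator ((hmem z₁).trans (and_iff_right hz₂)) rfl
  · rw [indicator_of_notMem hz₂]
    exact lintegral_eq_zero_of_ae_eq_zero <| .of_forall fun z₁ ↦
      indicator_of_notMem (s := S) (fun h ↦ hz₂ ((hmem z₁).1 h).1) f

theorem lintegral_fiber_norm_Pker_sq_le {k : ℕ} (hk : k ≠ 0) {w : ℂ × ℂ}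
    (hw : w ∈ hartogsTriangle k) {δ : ℝ} (hδ : δ < 1) {z₂ : ℂ} (hz₂ : ‖z₂‖ ≤ δ) :
    ∫⁻ z₁ in ball (0 : ℂ) (‖z₂‖ ^ (k⁻¹ : ℝ)), ENNReal.ofReal (‖Pker k (z₁, z₂) w‖ ^ 2) ≤
      ENNReal.ofReal (4 * π / (1 - δ) ^ 4 * (‖w.2‖ ^ 2)⁻¹ *
        ((1 - ‖w.1‖ ^ (2 * k) / ‖w.2‖ ^ 2) ^ 2)⁻¹ * ‖z₂‖ ^ (2 / k - 2 : ℝ)) := by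
  have hk₀ : (k : ℝ) ≠ 0 := Nat.cast_ne_zero.2 hk
  rcases eq_or_ne z₂ 0 with rfl | hz₂₀
  · simp [zero_rpow (inv_ne_zero hk₀)]
  have hz₂_pos : 0 < ‖z₂‖ := norm_pos_iff.2 hz₂₀
  have hw₂ := snd_ne_zero hw
  have hw₂_pos : 0 < ‖w.2‖ := norm_pos_iff.2 hw₂
  set R := ‖z₂‖ ^ (k⁻¹ : ℝ) with hR
  have hR_sq : (‖z₂‖ ^ 2)⁻¹ * R ^ 2 = ‖z₂‖ ^ (2 / k - 2 : ℝ) := by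
    rw [rpow_sub hz₂_pos, rpow_two, div_eq_mul_inv, mul_comm, hR, ← rpow_mul_natCast hz₂_pos.le]
    congr 2
    push_cast
    ring
  set g : ℂ → ℂ := fun z₁ ↦ (z₁ * conj w.1) ^ k / (z₂ * conj w.2) with hg
  calc ∫⁻ z₁ in ball (0 : ℂ) R, ENNReal.ofReal (‖Pker k (z₁, z₂) w‖ ^ 2)
      ≤ ∫⁻ z₁ in ball (0 : ℂ) R, ENNReal.ofReal (((1 - δ) ^ 4)⁻¹ * ((‖z₂‖ * ‖w.2‖) ^ 2)⁻¹) *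
          ENNReal.ofReal ((‖1 - g z₁‖ ^ 4)⁻¹) := by
        refine lintegral_mono fun z₁ ↦ ?_
        rw [← ENNReal.ofReal_mul (by positivity)]
        exact ENNReal.ofReal_le_ofReal (norm_Pker_sq_le hz₂₀ hz₂ hδ hw₂ hw.2.le)
    _ ≤ ENNReal.ofReal (((1 - δ) ^ 4)⁻¹ * ((‖z₂‖ * ‖w.2‖) ^ 2)⁻¹) *
          ENNReal.ofReal (4 * π * R ^ 2 / (1 - (‖w.1‖ ^ k / ‖w.2‖) ^ 2) ^ 2) := by
      rw [lintegral_const_mul' _ _ ENNReal.ofReal_ne_top]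
      gcongr
      exact lintegral_ball_inv_norm_one_sub_pow_four_le (by positivity)
        ((div_lt_one hw₂_pos).2 hw.1) (by fun_prop) (by simp [hg, hk])
        (by simpa using mapsTo_mul_pow_div_mul hk hz₂₀ (a := conj w.1) (b := conj w.2))
    _ = _ := by
      rw [← ENNReal.ofReal_mul (by positivity), ← hR_sq, div_pow, ← pow_mul, mul_comm k 2]
      ring_nf

theorem setLIntegral_norm_Pker_sq_le {k : ℕ} (hk : k ≠ 0) {w : ℂ × ℂ}
    (hw : w ∈ hartogsTriangle k) {δ : ℝ} (hδ₀ : 0 ≤ δ) (hδ₁ : δ < 1) :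
    ∫⁻ z in {z ∈ hartogsTriangle k | ‖z.2‖ < δ}, ENNReal.ofReal (‖Pker k z w‖ ^ 2) ≤
      ENNReal.ofReal (4 * π ^ 2 * k * δ ^ (2 / k : ℝ) / (1 - δ) ^ 4 * (‖w.2‖ ^ 2)⁻¹ *
        ((1 - ‖w.1‖ ^ (2 * k) / ‖w.2‖ ^ 2) ^ 2)⁻¹) := by
  have hk₀ : (0 : ℝ) < k := by positivity
  have hp : -2 < (2 / k - 2 : ℝ) := by linarith [div_pos two_pos hk₀]
  set K := 4 * π / (1 - δ) ^ 4 * (‖w.2‖ ^ 2)⁻¹ * ((1 - ‖w.1‖ ^ (2 * k) / ‖w.2‖ ^ 2) ^ 2)⁻¹ with hK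
  have hK₀ : 0 ≤ K := by positivity
  calc ∫⁻ z in {z ∈ hartogsTriangle k | ‖z.2‖ < δ}, ENNReal.ofReal (‖Pker k z w‖ ^ 2)
      = ∫⁻ z₂ in ball (0 : ℂ) δ, ∫⁻ z₁ in ball (0 : ℂ) (‖z₂‖ ^ (k⁻¹ : ℝ)),
          ENNReal.ofReal (‖Pker k (z₁, z₂) w‖ ^ 2) :=
        setLIntegral_norm_snd_lt hk hδ₁.le ((measurable_Pker k w).norm.pow_const 2).ennreal_ofReal
    _ ≤ ∫⁻ z₂ in ball (0 : ℂ) δ,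
          ENNReal.ofReal K * ENNReal.ofReal (‖z₂ - 0‖ ^ (2 / k - 2 : ℝ)) := by
      refine setLIntegral_mono' measurableSet_ball fun z₂ hz₂ ↦ ?_
      rw [← ENNReal.ofReal_mul hK₀, sub_zero]
      exact lintegral_fiber_norm_Pker_sq_le hk hw hδ₁ (mem_ball_zero_iff.1 hz₂).le
    _ = ENNReal.ofReal K * ENNReal.ofReal (2 * π / (2 / k - 2 + 2) * δ ^ (2 / k - 2 + 2 : ℝ)) := by
      rw [lintegral_const_mul' _ _ ENNReal.ofReal_ne_top, lintegral_ball_norm_sub_rpow hp 0 hδ₀]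
    _ = _ := by
      rw [← ENNReal.ofReal_mul hK₀, sub_add_cancel, hK]
      congr 1
      field_simp

theorem setIntegral_norm_Pker_sq_le {k : ℕ} (hk : k ≠ 0) {w : ℂ × ℂ}
    (hw : w ∈ hartogsTriangle k) {δ : ℝ} (hδ₀ : 0 ≤ δ) (hδ₁ : δ < 1) :
    ∫ z in {z ∈ hartogsTriangle k | ‖z.2‖ < δ}, ‖Pker k z w‖ ^ 2 ≤
      4 * π ^ 2 * k * δ ^ (2 / k : ℝ) / (1 - δ) ^ 4 * (‖w.2‖ ^ 2)⁻¹ *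
        ((1 - ‖w.1‖ ^ (2 * k) / ‖w.2‖ ^ 2) ^ 2)⁻¹ := by
  rw [integral_eq_lintegral_of_nonneg_ae (.of_forall fun z ↦ by positivity)
    ((measurable_Pker k w).norm.pow_const 2).aestronglyMeasurable]
  exact ENNReal.toReal_le_of_le_ofReal (by positivity)
    (setLIntegral_norm_Pker_sq_le hk hw hδ₀ hδ₁)

end hartogsTriangle

theorem exists_mem_Ioo_mul_rpow_div_one_sub_pow_le {p ε : ℝ} (hp : 0 < p) (hε : 0 < ε) (C : ℝ)
    (n : ℕ) : ∃ δ ∈ Ioo (0 : ℝ) 1, C * δ ^ p / (1 - δ) ^ n ≤ ε := by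
  have hcont : ContinuousAt (fun δ : ℝ ↦ C * δ ^ p / (1 - δ) ^ n) 0 :=
    (continuousAt_const.mul (continuousAt_id.rpow_const (.inr hp.le))).div (by fun_prop) (by simp)
  have hlim : Filter.Tendsto (fun δ : ℝ ↦ C * δ ^ p / (1 - δ) ^ n)
      (nhdsWithin 0 (Ioi 0)) (nhds 0) := by
    simpa [ContinuousAt, zero_rpow hp.ne'] using hcont.mono_left nhdsWithin_le_nhds
  obtain ⟨δ, hδε, hδ⟩ :=
    ((hlim.eventually_le_const hε).and (Ioo_mem_nhdsGT one_pos)).exists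
  exact ⟨δ, hδ, hδε⟩

/-- For every `ε > 0` there is `δ > 0` (depending only on `ε, k`) so that for all `w ∈ ℍ_k`,
`∫_{{z ∈ ℍ_k : |z₂| < δ}} |𝒫(z,w)|² dV(z) ≤ ε |w₂|⁻²(1-|w₂|²)⁻²(1-|w₁|^{2k}/|w₂|²)⁻²`. -/
theorem stmt4 (k : ℕ) (hk : 1 ≤ k) :
    ∀ ε : ℝ, 0 < ε → ∃ δ : ℝ, 0 < δ ∧ ∀ w ∈ hartogsTriangle k,
      (∫ z in {z ∈ hartogsTriangle k | ‖z.2‖ < δ}, ‖Pker k z w‖ ^ 2) ≤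
        ε * (‖w.2‖ ^ 2)⁻¹ * ((1 - ‖w.2‖ ^ 2) ^ 2)⁻¹ *
          ((1 - ‖w.1‖ ^ (2 * k) / ‖w.2‖ ^ 2) ^ 2)⁻¹ := by
  intro ε hε
  obtain ⟨δ, ⟨hδ₀, hδ₁⟩, hδε⟩ := exists_mem_Ioo_mul_rpow_div_one_sub_pow_le
    (p := 2 / k) (by positivity) hε (4 * π ^ 2 * k) 4
  refine ⟨δ, hδ₀, fun w hw ↦ ?_⟩
  have hw₂ : 1 ≤ ((1 - ‖w.2‖ ^ 2) ^ 2)⁻¹ := by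
    have hlt : ‖w.2‖ ^ 2 < 1 := pow_lt_one₀ (norm_nonneg _) hw.2 two_ne_zero
    exact (one_le_inv₀ (by nlinarith)).2
      (pow_le_one₀ (sub_pos.2 hlt).le (sub_le_self 1 (by positivity)))
  calc ∫ z in {z ∈ hartogsTriangle k | ‖z.2‖ < δ}, ‖Pker k z w‖ ^ 2
      ≤ 4 * π ^ 2 * k * δ ^ (2 / k : ℝ) / (1 - δ) ^ 4 * (‖w.2‖ ^ 2)⁻¹ *
          ((1 - ‖w.1‖ ^ (2 * k) / ‖w.2‖ ^ 2) ^ 2)⁻¹ :=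
        hartogsTriangle.setIntegral_norm_Pker_sq_le (by lia) hw hδ₀.le hδ₁
    _ ≤ ε * (‖w.2‖ ^ 2)⁻¹ * ((1 - ‖w.1‖ ^ (2 * k) / ‖w.2‖ ^ 2) ^ 2)⁻¹ := by gcongr ?_ * _ * _
    _ ≤ ε * (‖w.2‖ ^ 2)⁻¹ * ((1 - ‖w.2‖ ^ 2) ^ 2)⁻¹ *
          ((1 - ‖w.1‖ ^ (2 * k) / ‖w.2‖ ^ 2) ^ 2)⁻¹ := by
      gcongr ?_ * _
      exact le_mul_of_one_le_right (by positivity) hw₂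
end

section
/- Let k ∈ ℤ⁺ and consider the measure dμ(z) = |z₁|^{2k-2} dV(z) on ℍ_k = {(z₁,z₂) : |z₁|^k < |z₂| < 1}. Then the function T_μ(w) = ∫_{ℍ_k} |𝒫(z,w)|²/K(w,w) dμ(z), with 𝒫(z,w) = z₂conj(w₂)/((1-z₂conj(w₂))²(z₂conj(w₂)-(z₁conj(w₁))^k)²) and K the Bergman kernel of ℍ_k, satisfies c₁ ≤ T_μ(w) ≤ c₂ for all w ∈ ℍ_k and some constants 0 < c₁ ≤ c₂ depending only on k. -/
/-!
The map `(z₁, z₂) ↦ (ξ, z₂)` with `ξ = z₁^k / z₂` takes `ℍ_k` onto `𝔻 × 𝔻*`, covering almost every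
point `k` times, and `k² |z₁|^{2k-2} / |z₂|²` is its Jacobian, so the weight of `μ` is the natural
one. In these variables `|𝒫(z,w)|²` becomes a product of functions of `ξ` and of `z₂`, and the
integral over each disc is a multiple of `∫_𝔻 |1 - a z|⁻⁴`. Since `(1 - |a|²)² |1 - a z|⁻⁴` is the
Jacobian of an automorphism of `𝔻`, that integral equals `π / (1 - |a|²)²` exactly. Dividing by
`K(w, w)` leaves `T_μ(w) = π⁴ |w₂|² / N(w)`, where the numerator `N` of Edholm's formula has
nonnegative coefficients and is comparable to `|w₂|²` because `|w₁|^{2k} < |w₂|² < 1`.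
-/

open Complex ComplexConjugate MeasureTheory

/-- `p_k(s) = Σ_{j=1}^{k-1} j(k-j) s^{j-1}` (`p₁ ≡ 0`). -/
noncomputable def pPoly (k : ℕ) (s : ℂ) : ℂ :=
  ∑ j ∈ Finset.Ico 1 k, ((j * (k - j) : ℕ) : ℂ) * s ^ (j - 1)

/-- `q_k(s) = Σ_{j=1}^{k} (j² + (k-j)² s^k) s^{j-1}`. -/
noncomputable def qPoly (k : ℕ) (s : ℂ) : ℂ :=
  ∑ j ∈ Finset.Icc 1 k, (((j ^ 2 : ℕ) : ℂ) + (((k - j) ^ 2 : ℕ) : ℂ) * s ^ k) * s ^ (j - 1)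

/-- Edholm's formula for the Bergman kernel of `ℍ_k`. -/
noncomputable def bergmanHk (k : ℕ) (z w : ℂ × ℂ) : ℂ :=
  let s := z.1 * conj w.1
  let t := z.2 * conj w.2
  (pPoly k s * t ^ 2 + qPoly k s * t + s ^ k * pPoly k s) /
    ((k : ℂ) * (Real.pi : ℂ) ^ 2 * (1 - t) ^ 2 * (t - s ^ k) ^ 2)

/-- The function `T_μ` for `dμ(z) = |z₁|^{2k-2} dV(z)`:
`T_μ(w) = ∫_{ℍ_k} |𝒫(z,w)|²/K(w,w) |z₁|^{2k-2} dV(z)`. -/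
noncomputable def Tmu (k : ℕ) (w : ℂ × ℂ) : ℝ :=
  ∫ z in hartogsTriangle k,
    ‖Pker k z w‖ ^ 2 / (bergmanHk k w w).re * ‖z.1‖ ^ (2 * k - 2)

open Metric Set
open scoped ENNReal

theorem lintegral_image_eq_lintegral_enorm_deriv_sq_mul {s : Set ℂ} {f f' : ℂ → ℂ}
    (hs : MeasurableSet s) (hf' : ∀ z ∈ s, HasDerivWithinAt f (f' z) s z) (hf : InjOn f s)
    (g : ℂ → ℝ≥0∞) :
    ∫⁻ w in f '' s, g w = ∫⁻ z in s, ‖f' z‖ₑ ^ 2 * g (f z) := by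
  have hdet : ∀ c : ℂ, ENNReal.ofReal
      |((ContinuousLinearMap.toSpanSingleton ℂ c).restrictScalars ℝ).det| = ‖c‖ₑ ^ 2 := fun c => by
    simp [ContinuousLinearMap.det, LinearMap.det_restrictScalars, Algebra.norm_complex_eq,
      Complex.normSq_eq_norm_sq]
  simpa only [hdet] using lintegral_image_eq_lintegral_abs_det_fderiv_mul volume hs
    (fun z hz => (hf' z hz).hasFDerivWithinAt.restrictScalars ℝ) hf g

theorem enorm_sq_mul_lintegral_comp_mul {c : ℂ} (hc : c ≠ 0) (g : ℂ → ℝ≥0∞) :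
    ‖c‖ₑ ^ 2 * ∫⁻ z, g (c * z) = ∫⁻ z, g z := by
  have himage : (fun z => c * z) '' univ = univ :=
    image_univ_of_surjective (mul_left_surjective₀ hc)
  have h := lintegral_image_eq_lintegral_enorm_deriv_sq_mul .univ
    (fun z _ => ((hasDerivAt_id z).const_mul c).hasDerivWithinAt)
    (mul_right_injective₀ hc).injOn g
  simpa only [himage, Measure.restrict_univ, mul_one, id_eq,
    lintegral_const_mul' _ _ (show ‖c‖ₑ ^ 2 ≠ ⊤ by finiteness)] using h.symm

section AngularAverage

local instance fact_two_pi_pos : Fact (0 < 2 * Real.pi) := ⟨Real.two_pi_pos⟩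

theorem lintegral_eq_lintegral_Ioi_lintegral_addCircle {f : ℂ → ℝ≥0∞} (hf : Measurable f) :
    ∫⁻ z, f z = ∫⁻ r in Ioi (0 : ℝ), ENNReal.ofReal r *
      ∫⁻ θ : AddCircle (2 * Real.pi), f (r * θ.toCircle) := by
  rw [← Complex.lintegral_comp_polarCoord_symm, polarCoord_target, Measure.volume_eq_prod,
    setLIntegral_prod _ ?_]
  · simp only [smul_eq_mul]
    refine setLIntegral_congr_fun measurableSet_Ioi fun r _ => ?_
    rw [lintegral_const_mul' _ _ ENNReal.ofReal_ne_top, ← AddCircle.lintegral_preimage _ (-Real.pi),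
      setLIntegral_congr Ioo_ae_eq_Ioc, show -Real.pi + 2 * Real.pi = Real.pi by ring]
    simp [AddCircle.toCircle_apply_mk, Circle.coe_exp, Complex.exp_mul_I]
  · simp only [Complex.polarCoord_symm_apply]
    fun_prop

theorem lintegral_addCircle_comp_nsmul {T : ℝ} [Fact (0 < T)] {k : ℕ} (hk : k ≠ 0)
    {g : AddCircle T → ℝ≥0∞} (hg : Measurable g) :
    ∫⁻ θ, g (k • θ) = ∫⁻ θ, g θ := by
  simpa only [natCast_zsmul] using
    (Measure.measurePreserving_zsmul volume (Nat.cast_ne_zero.mpr hk)).lintegral_comp hg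

theorem lintegral_Ioi_comp_pow {k : ℕ} (hk : k ≠ 0) (g : ℝ → ℝ≥0∞) :
    ∫⁻ r in Ioi (0 : ℝ), ENNReal.ofReal (k * r ^ (k - 1)) * g (r ^ k) =
      ∫⁻ r in Ioi (0 : ℝ), g r := by
  have himage : (fun r : ℝ => r ^ k) '' Ioi 0 = Ioi 0 := by
    refine (image_subset_iff.2 fun r (hr : 0 < r) => pow_pos hr k).antisymm fun s (hs : 0 < s) => ?_
    exact ⟨s ^ (k⁻¹ : ℝ), Real.rpow_pos_of_pos hs _, Real.rpow_inv_natCast_pow hs.le hk⟩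
  rw [← lintegral_image_eq_lintegral_deriv_mul_of_monotoneOn measurableSet_Ioi
    (fun r _ => (hasDerivAt_pow k r).hasDerivWithinAt)
    (pow_left_monotoneOn.mono Ioi_subset_Ici_self), himage]

theorem natCast_mul_lintegral_comp_pow {k : ℕ} (hk : k ≠ 0) {f : ℂ → ℝ≥0∞} (hf : Measurable f) :
    k * ∫⁻ z, ‖z‖ₑ ^ (2 * k - 2) * f (z ^ k) = ∫⁻ z, f z := by
  have hangle (r : ℝ) : ∫⁻ θ : AddCircle (2 * Real.pi), f ((r * θ.toCircle) ^ k) =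
      ∫⁻ θ : AddCircle (2 * Real.pi), f ((r ^ k : ℝ) * θ.toCircle) := by
    simpa [mul_pow, AddCircle.toCircle_nsmul] using lintegral_addCircle_comp_nsmul hk
      (g := fun θ : AddCircle (2 * Real.pi) => f ((r ^ k : ℝ) * θ.toCircle)) (by fun_prop)
  rw [lintegral_eq_lintegral_Ioi_lintegral_addCircle (by fun_prop),
    lintegral_eq_lintegral_Ioi_lintegral_addCircle hf,
    ← lintegral_Ioi_comp_pow hk fun r => _ * ∫⁻ θ : AddCircle (2 * Real.pi), f (r * θ.toCircle),
    ← lintegral_const_mul' _ _ (by simp)]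
  refine setLIntegral_congr_fun measurableSet_Ioi fun r (hr : 0 < r) => ?_
  have hjac : (k : ℝ) * (r * r ^ (2 * k - 2)) = k * r ^ (k - 1) * r ^ k := by
    rw [← pow_succ', mul_assoc, ← pow_add]
    congr 2
    lia
  have henorm (θ : AddCircle (2 * Real.pi)) : ‖(r * θ.toCircle : ℂ)‖ₑ = ENNReal.ofReal r := by
    rw [← ofReal_norm, norm_mul, Circle.norm_coe, mul_one, Complex.norm_of_nonneg hr.le]
  simp only [henorm]
  rw [lintegral_const_mul' _ _ (by finiteness), hangle, ← ENNReal.ofReal_pow hr.le, ← mul_assoc,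
    ← mul_assoc, ← mul_assoc, ← ENNReal.ofReal_natCast, ← ENNReal.ofReal_mul (by positivity),
    ← ENNReal.ofReal_mul (by positivity), ← ENNReal.ofReal_mul (by positivity), mul_assoc (k : ℝ),
    hjac]

end AngularAverage

theorem sq_norm_one_sub_mul_sub_sq_norm (a z : ℂ) :
    ‖1 - a * z‖ ^ 2 - ‖z - conj a‖ ^ 2 = (1 - ‖a‖ ^ 2) * (1 - ‖z‖ ^ 2) := by
  simp only [Complex.sq_norm, Complex.normSq_apply, sub_re, sub_im, mul_re, mul_im, one_re, one_im,
    conj_re, conj_im]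
  ring

/-- The Möbius automorphism of the unit disc that sends `conj a` to `0`, for `‖a‖ < 1`. -/
noncomputable def mobius (a z : ℂ) : ℂ := (z - conj a) / (1 - a * z)

theorem one_sub_mul_ne_zero {a z : ℂ} (ha : ‖a‖ < 1) (hz : ‖z‖ < 1) : 1 - a * z ≠ 0 := by
  refine sub_ne_zero.2 fun h => ?_
  have := mul_lt_one_of_nonneg_of_lt_one_left (norm_nonneg a) ha hz.le
  rw [← norm_mul, ← h, norm_one] at this
  exact this.false

theorem mobius_mem_ball {a z : ℂ} (ha : ‖a‖ < 1) (hz : z ∈ ball 0 1) : mobius a z ∈ ball 0 1 := by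
  rw [mem_ball_zero_iff] at hz ⊢
  have hne := one_sub_mul_ne_zero ha hz
  rw [mobius, norm_div, div_lt_one (norm_pos_iff.2 hne),
    ← sq_lt_sq₀ (norm_nonneg _) (norm_nonneg _), ← sub_pos, sq_norm_one_sub_mul_sub_sq_norm]
  exact mul_pos (sub_pos.2 <| pow_lt_one₀ (norm_nonneg a) ha two_ne_zero)
    (sub_pos.2 <| pow_lt_one₀ (norm_nonneg z) hz two_ne_zero)

theorem one_sub_mul_conj_ne_zero {a : ℂ} (ha : ‖a‖ < 1) : 1 - a * conj a ≠ 0 :=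
  one_sub_mul_ne_zero ha (by rwa [norm_conj])

theorem mobius_neg_mobius {a z : ℂ} (ha : ‖a‖ < 1) (hz : z ∈ ball 0 1) :
    mobius (-a) (mobius a z) = z := by
  have hne := one_sub_mul_ne_zero ha (mem_ball_zero_iff.1 hz)
  have hnum : mobius a z - conj (-a) = z * (1 - a * conj a) / (1 - a * z) := by
    rw [mobius, eq_div_iff hne, sub_mul, div_mul_cancel₀ _ hne, map_neg]
    ring
  have hden : 1 - -a * mobius a z = (1 - a * conj a) / (1 - a * z) := by
    rw [mobius, eq_div_iff hne, sub_mul, mul_assoc, div_mul_cancel₀ _ hne]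
    ring
  rw [mobius, hnum, hden, div_div_div_cancel_right₀ hne,
    mul_div_cancel_right₀ _ (one_sub_mul_conj_ne_zero ha)]

theorem bijOn_mobius_ball {a : ℂ} (ha : ‖a‖ < 1) : BijOn (mobius a) (ball 0 1) (ball 0 1) := by
  have ha' : ‖-a‖ < 1 := by rwa [norm_neg]
  refine InvOn.bijOn (f' := mobius (-a)) ⟨fun z hz => mobius_neg_mobius ha hz, fun z hz => ?_⟩
    (fun z => mobius_mem_ball ha) (fun z => mobius_mem_ball ha')
  simpa only [neg_neg] using mobius_neg_mobius ha' hz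

theorem hasDerivAt_mobius {a z : ℂ} (h : 1 - a * z ≠ 0) :
    HasDerivAt (mobius a) ((1 - a * conj a) / (1 - a * z) ^ 2) z := by
  convert! ((hasDerivAt_id z).sub_const (conj a)).div
    (((hasDerivAt_id z).const_mul a).const_sub 1) h using 1
  simp only [id_eq]
  ring

theorem lintegral_ball_inv_one_sub_mul_pow_four {a : ℂ} (ha : ‖a‖ < 1) :
    ∫⁻ z in ball 0 1, ‖((1 - a * z) ^ 2)⁻¹‖ₑ ^ 2 =
      ENNReal.ofReal (Real.pi / (1 - ‖a‖ ^ 2) ^ 2) := by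
  have hbij := bijOn_mobius_ball ha
  have harea := lintegral_image_eq_lintegral_enorm_deriv_sq_mul measurableSet_ball
    (fun z hz => (hasDerivAt_mobius (one_sub_mul_ne_zero ha
      (mem_ball_zero_iff.1 hz))).hasDerivWithinAt) hbij.injOn 1
  have hpos : 0 < 1 - ‖a‖ ^ 2 := sub_pos.2 (pow_lt_one₀ (norm_nonneg a) ha two_ne_zero)
  have hnorm : ‖1 - a * conj a‖ₑ ^ 2 = ENNReal.ofReal ((1 - ‖a‖ ^ 2) ^ 2) := by
    rw [ENNReal.ofReal_pow hpos.le, ← ofReal_norm, Complex.mul_conj']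
    norm_cast
    rw [Real.norm_of_nonneg hpos.le]
  simp only [hbij.image_eq, Pi.one_apply, mul_one, div_eq_mul_inv, enorm_mul, mul_pow] at harea
  rw [lintegral_const_mul' _ _ (by finiteness), hnorm, lintegral_one, Measure.restrict_apply_univ,
    Complex.volume_ball, ENNReal.ofReal_one, one_pow, one_mul] at harea
  rw [ENNReal.ofReal_div_of_pos (by positivity), ENNReal.eq_div_iff (by simpa using hpos.ne')
    ENNReal.ofReal_ne_top, ← harea, ← NNReal.coe_real_pi, ENNReal.ofReal_coe_nnreal]

theorem natCast_mul_lintegral_comp_pow_div {k : ℕ} (hk : k ≠ 0) {f : ℂ × ℂ → ℝ≥0∞}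
    (hf : Measurable f) :
    k * ∫⁻ z : ℂ × ℂ, ‖z.1‖ₑ ^ (2 * k - 2) * f (z.1 ^ k / z.2, z.2) =
      ∫⁻ ξ : ℂ × ℂ, ‖ξ.2‖ₑ ^ 2 * f ξ := by
  rw [Measure.volume_eq_prod, lintegral_prod_symm' _ (by fun_prop),
    lintegral_prod_symm' _ (by fun_prop), ← lintegral_const_mul' _ _ (by finiteness)]
  have hne : ∀ᵐ y : ℂ, y ≠ 0 := by simp [ae_iff]
  refine lintegral_congr_ae (hne.mono fun y hy => ?_)
  calc k * ∫⁻ x, ‖x‖ₑ ^ (2 * k - 2) * f (x ^ k / y, y)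
      = ∫⁻ x, f (x / y, y) :=
        natCast_mul_lintegral_comp_pow hk (f := fun x => f (x / y, y)) (by fun_prop)
    _ = ‖y‖ₑ ^ 2 * ∫⁻ ξ, f (y * ξ / y, y) :=
      (enorm_sq_mul_lintegral_comp_mul hy fun x => f (x / y, y)).symm
    _ = ∫⁻ ξ, ‖y‖ₑ ^ 2 * f (ξ, y) := by
      simp only [mul_div_cancel_left₀ _ hy, lintegral_const_mul' _ _ (by finiteness : ‖y‖ₑ ^ 2 ≠ ⊤)]

/-- The product `𝔻 × 𝔻*` of the unit disc and the punctured unit disc, the image of `ℍ_k` under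
`(z₁, z₂) ↦ (z₁^k / z₂, z₂)`. -/
def puncturedBidisc : Set (ℂ × ℂ) :=
  ball 0 1 ×ˢ (ball 0 1 \ {0})

theorem measurableSet_puncturedBidisc : MeasurableSet puncturedBidisc :=
  measurableSet_ball.prod (measurableSet_ball.diff (measurableSet_singleton 0))

theorem mem_hartogsTriangle_iff {k : ℕ} {z : ℂ × ℂ} :
    z ∈ hartogsTriangle k ↔ (z.1 ^ k / z.2, z.2) ∈ puncturedBidisc := by
  rcases eq_or_ne z.2 0 with h | h
  · simp [hartogsTriangle, puncturedBidisc, h]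
  · simp [hartogsTriangle, puncturedBidisc, h, div_lt_one]

theorem ne_zero_of_mem_hartogsTriangle {k : ℕ} {w : ℂ × ℂ} (hw : w ∈ hartogsTriangle k) :
    k ≠ 0 := by
  rintro rfl
  exact (hw.1.trans hw.2).ne (pow_zero _)

theorem snd_ne_zero_of_mem_hartogsTriangle {k : ℕ} {z : ℂ × ℂ} (hz : z ∈ hartogsTriangle k) :
    z.2 ≠ 0 :=
  norm_pos_iff.1 ((pow_nonneg (norm_nonneg z.1) k).trans_lt hz.1)

theorem measurableSet_hartogsTriangle (k : ℕ) : MeasurableSet (hartogsTriangle k) :=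
  (measurableSet_lt (f := fun z : ℂ × ℂ => ‖z.1‖ ^ k) (g := fun z => ‖z.2‖)
    (by fun_prop) (by fun_prop)).inter
    (measurableSet_lt (f := fun z : ℂ × ℂ => ‖z.2‖) (by fun_prop) (by fun_prop))

theorem natCast_mul_setLIntegral_hartogsTriangle {k : ℕ} (hk : k ≠ 0) {f : ℂ × ℂ → ℝ≥0∞}
    (hf : Measurable f) :
    k * ∫⁻ z in hartogsTriangle k, ‖z.1‖ₑ ^ (2 * k - 2) * f (z.1 ^ k / z.2, z.2) =
      ∫⁻ ξ in puncturedBidisc, ‖ξ.2‖ₑ ^ 2 * f ξ := by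
  have hindicator (z : ℂ × ℂ) : (hartogsTriangle k).indicator
        (fun z => ‖z.1‖ₑ ^ (2 * k - 2) * f (z.1 ^ k / z.2, z.2)) z =
      ‖z.1‖ₑ ^ (2 * k - 2) * puncturedBidisc.indicator f (z.1 ^ k / z.2, z.2) := by
    by_cases hz : z ∈ hartogsTriangle k
    · rw [indicator_of_mem hz, indicator_of_mem (mem_hartogsTriangle_iff.1 hz)]
    · rw [indicator_of_notMem hz, indicator_of_notMem (mt mem_hartogsTriangle_iff.2 hz), mul_zero]
  rw [← lintegral_indicator (measurableSet_hartogsTriangle k),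
    ← lintegral_indicator measurableSet_puncturedBidisc]
  simpa only [hindicator, indicator_mul_right] using
    natCast_mul_lintegral_comp_pow_div hk (hf.indicator measurableSet_puncturedBidisc)

theorem Pker_eq_mul {k : ℕ} {z w : ℂ × ℂ} (hz : z.2 ≠ 0) (hw : w.2 ≠ 0) :
    Pker k z w = (conj w.2)⁻¹ * z.2⁻¹ * ((1 - conj w.2 * z.2) ^ 2)⁻¹ *
      ((1 - conj w.1 ^ k / conj w.2 * (z.1 ^ k / z.2)) ^ 2)⁻¹ := by
  have hw' : conj w.2 ≠ 0 := by simpa using hw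
  have hfactor : z.2 * conj w.2 - (z.1 * conj w.1) ^ k =
      z.2 * conj w.2 * (1 - conj w.1 ^ k / conj w.2 * (z.1 ^ k / z.2)) := by
    rw [mul_pow]
    field_simp
  rw [Pker, hfactor, mul_comm (conj w.2) z.2]
  set ξ := conj w.1 ^ k / conj w.2 * (z.1 ^ k / z.2)
  rw [mul_pow, div_eq_mul_inv, mul_inv, mul_inv]
  field_simp

theorem setLIntegral_puncturedBidisc_inv_one_sub_mul_pow_four {a b : ℂ} (ha : ‖a‖ < 1)
    (hb : ‖b‖ < 1) :
    ∫⁻ ξ in puncturedBidisc,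
        ‖((1 - a * ξ.1) ^ 2)⁻¹‖ₑ ^ 2 * ‖((1 - b * ξ.2) ^ 2)⁻¹‖ₑ ^ 2 =
      ENNReal.ofReal (Real.pi ^ 2 / ((1 - ‖a‖ ^ 2) ^ 2 * (1 - ‖b‖ ^ 2) ^ 2)) := by
  have hpunctured : (ball 0 1 \ {0} : Set ℂ) =ᵐ[volume] ball (0 : ℂ) 1 :=
    sdiff_null_ae_eq_self (measure_singleton 0)
  rw [puncturedBidisc, Measure.volume_eq_prod, ← Measure.prod_restrict,
    lintegral_prod_mul (f := fun x : ℂ => ‖((1 - a * x) ^ 2)⁻¹‖ₑ ^ 2)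
      (g := fun x : ℂ => ‖((1 - b * x) ^ 2)⁻¹‖ₑ ^ 2) (by fun_prop) (by fun_prop),
    setLIntegral_congr hpunctured, lintegral_ball_inv_one_sub_mul_pow_four ha,
    lintegral_ball_inv_one_sub_mul_pow_four hb, ← ENNReal.ofReal_mul (by positivity),
    div_mul_div_comm, sq Real.pi]

theorem natCast_mul_setLIntegral_enorm_Pker_sq {k : ℕ} {w : ℂ × ℂ}
    (hw : w ∈ hartogsTriangle k) :
    k * ∫⁻ z in hartogsTriangle k, ‖z.1‖ₑ ^ (2 * k - 2) * ‖Pker k z w‖ₑ ^ 2 =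
      ENNReal.ofReal (Real.pi ^ 2 / (‖w.2‖ ^ 2 * ((1 - (‖w.1‖ ^ k / ‖w.2‖) ^ 2) ^ 2 *
        (1 - ‖w.2‖ ^ 2) ^ 2))) := by
  have hk := ne_zero_of_mem_hartogsTriangle hw
  have hw₂ := snd_ne_zero_of_mem_hartogsTriangle hw
  obtain ⟨hlt, hlt_one⟩ := hw
  set a := conj w.1 ^ k / conj w.2 with ha
  have hanorm : ‖a‖ = ‖w.1‖ ^ k / ‖w.2‖ := by simp [ha]
  set G : ℂ × ℂ → ℝ≥0∞ := fun ξ =>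
    ‖(conj w.2)⁻¹ * ξ.2⁻¹ * ((1 - conj w.2 * ξ.2) ^ 2)⁻¹ * ((1 - a * ξ.1) ^ 2)⁻¹‖ₑ ^ 2 with hG
  have hGmul (ξ : ℂ × ℂ) (hξ : ξ.2 ≠ 0) : ‖ξ.2‖ₑ ^ 2 * G ξ = ‖(conj w.2)⁻¹‖ₑ ^ 2 *
      (‖((1 - a * ξ.1) ^ 2)⁻¹‖ₑ ^ 2 * ‖((1 - conj w.2 * ξ.2) ^ 2)⁻¹‖ₑ ^ 2) := by
    simp only [hG, ← enorm_pow, ← enorm_mul]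
    congr 1
    field_simp
  calc k * ∫⁻ z in hartogsTriangle k, ‖z.1‖ₑ ^ (2 * k - 2) * ‖Pker k z w‖ₑ ^ 2
      = k * ∫⁻ z in hartogsTriangle k, ‖z.1‖ₑ ^ (2 * k - 2) * G (z.1 ^ k / z.2, z.2) := by
        congr 1
        refine setLIntegral_congr_fun (measurableSet_hartogsTriangle k) fun z hz => ?_
        simp only [Pker_eq_mul (snd_ne_zero_of_mem_hartogsTriangle hz) hw₂, hG, ha]
    _ = ∫⁻ ξ in puncturedBidisc, ‖ξ.2‖ₑ ^ 2 * G ξ :=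
        natCast_mul_setLIntegral_hartogsTriangle hk (by fun_prop)
    _ = ‖(conj w.2)⁻¹‖ₑ ^ 2 * ∫⁻ ξ in puncturedBidisc,
          ‖((1 - a * ξ.1) ^ 2)⁻¹‖ₑ ^ 2 * ‖((1 - conj w.2 * ξ.2) ^ 2)⁻¹‖ₑ ^ 2 := by
        rw [← lintegral_const_mul' _ _ (by finiteness)]
        exact setLIntegral_congr_fun measurableSet_puncturedBidisc fun ξ hξ => hGmul ξ hξ.2.2
    _ = _ := by
        rw [setLIntegral_puncturedBidisc_inv_one_sub_mul_pow_four
            (by rwa [hanorm, div_lt_one (norm_pos_iff.2 hw₂)])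
            (by rwa [norm_conj]), hanorm, norm_conj, ← ofReal_norm, norm_inv, norm_conj,
          ← ENNReal.ofReal_pow (by positivity), ← ENNReal.ofReal_mul (by positivity)]
        congr 1
        field_simp

theorem setIntegral_norm_Pker_sq_mul {k : ℕ} {w : ℂ × ℂ}
    (hw : w ∈ hartogsTriangle k) :
    ∫ z in hartogsTriangle k, ‖Pker k z w‖ ^ 2 * ‖z.1‖ ^ (2 * k - 2) =
      Real.pi ^ 2 / (k * (‖w.2‖ ^ 2 * ((1 - (‖w.1‖ ^ k / ‖w.2‖) ^ 2) ^ 2 *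
        (1 - ‖w.2‖ ^ 2) ^ 2))) := by
  have hmeas : Measurable fun z => Pker k z w := by unfold Pker; fun_prop
  have h := congrArg ENNReal.toReal (natCast_mul_setLIntegral_enorm_Pker_sq hw)
  rw [ENNReal.toReal_mul, ENNReal.toReal_natCast, ENNReal.toReal_ofReal (by positivity)] at h
  have hint : ∫ z in hartogsTriangle k, ‖Pker k z w‖ ^ 2 * ‖z.1‖ ^ (2 * k - 2) =
      (∫⁻ z in hartogsTriangle k, ‖z.1‖ₑ ^ (2 * k - 2) * ‖Pker k z w‖ₑ ^ 2).toReal := by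
    simp only [← norm_pow, ← norm_mul, ← enorm_pow, ← enorm_mul]
    rw [integral_norm_eq_lintegral_enorm (by fun_prop)]
    simp only [mul_comm]
  rw [hint, mul_comm (k : ℝ), ← div_div, ← h,
    mul_div_cancel_left₀ _ (Nat.cast_ne_zero.2 (ne_zero_of_mem_hartogsTriangle hw))]

/-- The polynomial `pPoly` as a function of a real variable. -/
noncomputable def pReal (k : ℕ) (s : ℝ) : ℝ :=
  ∑ j ∈ Finset.Ico 1 k, ((j * (k - j) : ℕ) : ℝ) * s ^ (j - 1)

/-- The polynomial `qPoly` as a function of a real variable. -/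
noncomputable def qReal (k : ℕ) (s : ℝ) : ℝ :=
  ∑ j ∈ Finset.Icc 1 k, (((j ^ 2 : ℕ) : ℝ) + (((k - j) ^ 2 : ℕ) : ℝ) * s ^ k) * s ^ (j - 1)

/-- The numerator of Edholm's formula for `K(w, w)`, as a function of `s = |w₁|²`, `t = |w₂|²`. -/
noncomputable def bergmanNum (k : ℕ) (s t : ℝ) : ℝ :=
  pReal k s * t ^ 2 + qReal k s * t + s ^ k * pReal k s

theorem bergmanHk_self_re (k : ℕ) (w : ℂ × ℂ) : (bergmanHk k w w).re =
    bergmanNum k (‖w.1‖ ^ 2) (‖w.2‖ ^ 2) / (k * Real.pi ^ 2 * (1 - ‖w.2‖ ^ 2) ^ 2 *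
      (‖w.2‖ ^ 2 - (‖w.1‖ ^ 2) ^ k) ^ 2) := by
  rw [← Complex.ofReal_re (_ / _)]
  simp only [bergmanHk, Complex.mul_conj', pPoly, qPoly, bergmanNum, pReal, qReal]
  push_cast
  rfl

theorem pReal_nonneg (k : ℕ) {s : ℝ} (hs : 0 ≤ s) : 0 ≤ pReal k s := by
  unfold pReal
  positivity

theorem one_le_qReal {k : ℕ} (hk : 1 ≤ k) {s : ℝ} (hs : 0 ≤ s) : 1 ≤ qReal k s := by
  have hfirst : 1 ≤ ((1 ^ 2 : ℕ) + ((k - 1) ^ 2 : ℕ) * s ^ k) * s ^ (1 - 1) := by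
    rw [Nat.sub_self, pow_zero, mul_one, one_pow, Nat.cast_one]
    exact le_add_of_nonneg_right (by positivity)
  exact hfirst.trans <| Finset.single_le_sum
    (f := fun j : ℕ => ((j ^ 2 : ℕ) + ((k - j) ^ 2 : ℕ) * s ^ k) * s ^ (j - 1))
    (fun j _ => by positivity) (Finset.mem_Icc.2 ⟨le_rfl, hk⟩)

theorem pReal_le_pReal_one (k : ℕ) {s : ℝ} (h₀ : 0 ≤ s) (h₁ : s ≤ 1) : pReal k s ≤ pReal k 1 := by
  unfold pReal
  gcongr

theorem qReal_le_qReal_one (k : ℕ) {s : ℝ} (h₀ : 0 ≤ s) (h₁ : s ≤ 1) : qReal k s ≤ qReal k 1 := by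
  unfold qReal
  gcongr

theorem le_bergmanNum {k : ℕ} (hk : 1 ≤ k) {s t : ℝ} (hs : 0 ≤ s) (ht : 0 ≤ t) :
    t ≤ bergmanNum k s t := by
  have hp := pReal_nonneg k hs
  calc t ≤ qReal k s * t := le_mul_of_one_le_left ht (one_le_qReal hk hs)
    _ ≤ pReal k s * t ^ 2 + qReal k s * t := le_add_of_nonneg_left (by positivity)
    _ ≤ bergmanNum k s t := le_add_of_nonneg_right (by positivity)

theorem bergmanNum_le {k : ℕ} {s t : ℝ} (hs₀ : 0 ≤ s) (hs₁ : s ≤ 1) (hst : s ^ k ≤ t)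
    (ht₁ : t ≤ 1) : bergmanNum k s t ≤ bergmanNum k 1 1 * t := by
  have ht : 0 ≤ t := (pow_nonneg hs₀ k).trans hst
  have hp₀ := pReal_nonneg k hs₀
  have hp := pReal_le_pReal_one k hs₀ hs₁
  have hp₁ := pReal_nonneg k zero_le_one
  calc bergmanNum k s t ≤ pReal k 1 * t + qReal k 1 * t + t * pReal k 1 := by
        unfold bergmanNum
        gcongr
        · exact pow_le_of_le_one ht ht₁ two_ne_zero
        · exact qReal_le_qReal_one k hs₀ hs₁
    _ = bergmanNum k 1 1 * t := by
        simp only [bergmanNum, one_pow]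
        ring

theorem norm_fst_lt_one_of_mem_hartogsTriangle {k : ℕ} {w : ℂ × ℂ} (hw : w ∈ hartogsTriangle k) :
    ‖w.1‖ < 1 :=
  lt_of_pow_lt_pow_left₀ k zero_le_one (by simpa using hw.1.trans hw.2)

theorem Tmu_eq {k : ℕ} {w : ℂ × ℂ} (hw : w ∈ hartogsTriangle k) :
    Tmu k w = Real.pi ^ 4 * ‖w.2‖ ^ 2 / bergmanNum k (‖w.1‖ ^ 2) (‖w.2‖ ^ 2) := by
  have hk := ne_zero_of_mem_hartogsTriangle hw
  have hw₂ : ‖w.2‖ ≠ 0 := norm_ne_zero_iff.2 (snd_ne_zero_of_mem_hartogsTriangle hw)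
  have hdisc : 1 - ‖w.2‖ ^ 2 ≠ 0 :=
    (sub_pos.2 (pow_lt_one₀ (norm_nonneg _) hw.2 two_ne_zero)).ne'
  have hdiag : ‖w.2‖ ^ 2 - (‖w.1‖ ^ k) ^ 2 ≠ 0 :=
    (sub_pos.2 (pow_lt_pow_left₀ hw.1 (by positivity) two_ne_zero)).ne'
  have hslope : 1 - (‖w.1‖ ^ k / ‖w.2‖) ^ 2 = (‖w.2‖ ^ 2 - (‖w.1‖ ^ k) ^ 2) / ‖w.2‖ ^ 2 := by
    field_simp
  have hconst : Tmu k w = (∫ z in hartogsTriangle k,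
      ‖Pker k z w‖ ^ 2 * ‖z.1‖ ^ (2 * k - 2)) / (bergmanHk k w w).re := by
    simp only [Tmu, div_mul_eq_mul_div, integral_div]
  rw [hconst, setIntegral_norm_Pker_sq_mul hw, bergmanHk_self_re, pow_right_comm ‖w.1‖, hslope]
  generalize ‖w.2‖ ^ 2 - (‖w.1‖ ^ k) ^ 2 = A at *
  generalize 1 - ‖w.2‖ ^ 2 = B at *
  field_simp

/-- For `dμ(z) = |z₁|^{2k-2} dV(z)` on `ℍ_k`, `T_μ ≈ 1`: there are constants
`0 < c₁ ≤ c₂` (depending only on `k`) with `c₁ ≤ T_μ(w) ≤ c₂` for all `w ∈ ℍ_k`. -/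
theorem stmt18 (k : ℕ) (hk : 1 ≤ k) :
    ∃ c₁ c₂ : ℝ, 0 < c₁ ∧ c₁ ≤ c₂ ∧
      ∀ w ∈ hartogsTriangle k, c₁ ≤ Tmu k w ∧ Tmu k w ≤ c₂ := by
  have hN : 1 ≤ bergmanNum k 1 1 := le_bergmanNum hk zero_le_one zero_le_one
  refine ⟨Real.pi ^ 4 / bergmanNum k 1 1, Real.pi ^ 4, by positivity,
    div_le_self (by positivity) hN, fun w hw => ?_⟩
  have ht : 0 < ‖w.2‖ ^ 2 := pow_pos (norm_pos_iff.2 (snd_ne_zero_of_mem_hartogsTriangle hw)) 2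
  have hs : ‖w.1‖ ^ 2 ≤ 1 :=
    pow_le_one₀ (norm_nonneg _) (norm_fst_lt_one_of_mem_hartogsTriangle hw).le
  have hst : (‖w.1‖ ^ 2) ^ k ≤ ‖w.2‖ ^ 2 := by
    rw [pow_right_comm]
    exact pow_le_pow_left₀ (by positivity) hw.1.le 2
  have hlower := le_bergmanNum hk (sq_nonneg ‖w.1‖) ht.le
  have hupper := bergmanNum_le (sq_nonneg ‖w.1‖) hs hst (pow_le_one₀ (norm_nonneg _) hw.2.le)
  rw [Tmu_eq hw]
  constructor
  · rw [div_le_div_iff₀ (by positivity) (ht.trans_le hlower), mul_assoc, mul_comm (‖w.2‖ ^ 2)]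
    gcongr
  · rw [div_le_iff₀ (ht.trans_le hlower)]
    gcongr
end
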